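/- Fix a finite machine set M, a job set J over M, positive integers L and l with L ≥ D(J), and a function h : J → {0,…,L−1} that is (L,l)-good for J. Then in any stateless weak-scheduler execution up to time 2·L·l, starting from arbitrary initial positions and with any choices of which eligible jobs the machines work on, at least half of the jobs are complete at time 2·L·l: |{ j ∈ J : pos_{2Ll}(j) = len(j) }| ≥ |J|/2. -/

import Mathlib

open Finset

/-- The dilation of the job set: the maximum length of a job's machine sequence. -/
def dilation {M J : Type*} [Fintype J] (seq : J → List M) : ℕ :=
  Finset.univ.sup fun j : J => (seq j).length

/-- A bad pattern for the job set given by the finite type `J` with machine sequences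
`seq : J → List M`, with parameters `L` and `l`. -/
def IsBadPattern {M J : Type*} [Fintype M] [Fintype J] (seq : J → List M)
    (L l : ℕ) (B : Fin (2 * L) → M → Finset (J × ℕ)) : Prop :=
  (∀ T m, ∀ p ∈ B T m, (seq p.1)[p.2]? = some m) ∧
  (∀ T m T' m', ∀ p ∈ B T m, ∀ p' ∈ B T' m', p.1 = p'.1 → T = T' ∧ m = m' ∧ p = p') ∧
  (∀ T m, B T m = ∅ ∨ l < (B T m).card) ∧
  Fintype.card J < 2 * ∑ T, ∑ m, (B T m).card

/-- The bad pattern `B` occurs for the hash function `h : J → {0,…,L−1}` if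
`h(j) + i = T` for all `T`, `m` and `(j,i) ∈ B T m`. -/
def PatternOccurs {M J : Type*} [Fintype M] [Fintype J]
    {L : ℕ} (B : Fin (2 * L) → M → Finset (J × ℕ)) (h : J → Fin L) : Prop :=
  ∀ T m, ∀ p ∈ B T m, (h p.1 : ℕ) + p.2 = (T : ℕ)

/-- A hash function `h : J → {0,…,L−1}` is `(L,l)`-good for the job set `J` if no bad
pattern for `(J, L, l)` occurs for `h`. -/
def IsGoodHash {M J : Type*} [Fintype M] [Fintype J] (seq : J → List M)
    (L l : ℕ) (h : J → Fin L) : Prop :=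
  ∀ B : Fin (2 * L) → M → Finset (J × ℕ), IsBadPattern seq L l B → ¬ PatternOccurs B h

/-- A stateless weak-scheduler execution up to time `tmax`, for the job set given by the
finite type `J` with machine sequences `seq : J → List M`, small time step count `l`, and
hash function `h : J → Fin L`. `pos t j` is the position of job `j` at time `t`; the
initial positions `pos 0` are arbitrary. At each step `t → t+1`, with `T := ⌊t/l⌋` and
`Q m := { j : pos t j < len j, seq(j)_{pos t j} = m, h j + pos t j = T }`: if
`0 < |Q m| ≤ l` then exactly one job of `Q m` advances; every other job keeps its
position. -/
def IsStatelessExec {M J : Type*} [Fintype M] [DecidableEq M] [Fintype J]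
    (seq : J → List M) {L : ℕ} (l : ℕ) (h : J → Fin L) (tmax : ℕ)
    (pos : ℕ → J → ℕ) : Prop :=
  (∀ t ≤ tmax, ∀ j, pos t j ≤ (seq j).length) ∧
  (∀ t < tmax,
    let Q : M → Finset J := fun m =>
      Finset.univ.filter fun j =>
        pos t j < (seq j).length ∧ (seq j)[pos t j]? = some m ∧
          (h j : ℕ) + pos t j = t / l
    ∃ worksel : M → Option J,
      (∀ m j, worksel m = some j → j ∈ Q m ∧ (Q m).card ≤ l) ∧
      (∀ m, 0 < (Q m).card → (Q m).card ≤ l → (worksel m).isSome) ∧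
      (∀ j, (∃ m, worksel m = some j) → pos (t + 1) j = pos t j + 1) ∧
      (∀ j, (¬ ∃ m, worksel m = some j) → pos (t + 1) j = pos t j))

/-!
Fix a big step `T` and a machine `m`, and consider the jobs `j` at a position requiring `m` with
`h j + pos j = T`. From time `T * l` on this set only shrinks, and only during the `l` small steps
of `T`. If it starts with more than `l` jobs, then `m` never touches it; if it starts with at most
`l` jobs, then `m` removes one job per small step and empties it. So at time `2 * L * l` each of
these sets is empty or has more than `l` jobs, and together they contain all incomplete jobs. If
more than half of the jobs were incomplete, they would form a bad pattern occurring for `h`.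
-/

theorem length_le_dilation {M J : Type*} [Fintype J] (seq : J → List M) (j : J) :
    (seq j).length ≤ dilation seq :=
  le_sup (f := fun j => (seq j).length) (mem_univ j)

section Waiting

variable {M J : Type*} [DecidableEq M] [Fintype J] {L : ℕ}

/-- The jobs which, at positions `pos`, wait for machine `m` to process them in big step `T`. At
positions `pos t` and `T = t / l` this unfolds to the set `Q m` of `IsStatelessExec`. -/
def waitingJobs (seq : J → List M) (h : J → Fin L) (pos : J → ℕ) (T : ℕ) (m : M) : Finset J :=
  {j | pos j < (seq j).length ∧ (seq j)[pos j]? = some m ∧ (h j : ℕ) + pos j = T}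

/-- The family of sets of waiting jobs, each job paired with its position, in the format of a bad
pattern. -/
def waitingPattern (seq : J → List M) (h : J → Fin L) (pos : J → ℕ) :
    Fin (2 * L) → M → Finset (J × ℕ) :=
  fun T m => (waitingJobs seq h pos T m).map
    ⟨fun j => (j, pos j), fun _ _ heq => congrArg Prod.fst heq⟩

variable {seq : J → List M} {h : J → Fin L} {pos : J → ℕ}

theorem mem_waitingJobs {T : ℕ} {m : M} {j : J} :
    j ∈ waitingJobs seq h pos T m ↔
      pos j < (seq j).length ∧ (seq j)[pos j]? = some m ∧ (h j : ℕ) + pos j = T := by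
  simp only [waitingJobs, mem_filter, mem_univ, true_and]

theorem waitingJobs_unique {T T' : ℕ} {m m' : M} {j : J} (hj : j ∈ waitingJobs seq h pos T m)
    (hj' : j ∈ waitingJobs seq h pos T' m') : T = T' ∧ m = m' := by
  obtain ⟨-, hm, hT⟩ := mem_waitingJobs.mp hj
  obtain ⟨-, hm', hT'⟩ := mem_waitingJobs.mp hj'
  exact ⟨hT.symm.trans hT', Option.some.inj (hm.symm.trans hm')⟩

theorem mem_waitingPattern {T : Fin (2 * L)} {m : M} {p : J × ℕ} :
    p ∈ waitingPattern seq h pos T m ↔ p.1 ∈ waitingJobs seq h pos T m ∧ p.2 = pos p.1 := by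
  obtain ⟨j, i⟩ := p
  refine mem_map.trans ⟨?_, fun ⟨hj, hi⟩ => ⟨j, hj, Prod.ext rfl hi.symm⟩⟩
  rintro ⟨_, hj, ⟨⟩⟩
  exact ⟨hj, rfl⟩

theorem card_waitingPattern (T : Fin (2 * L)) (m : M) :
    #(waitingPattern seq h pos T m) = #(waitingJobs seq h pos T m) :=
  card_map _

theorem exists_mem_waitingJobs_of_lt_length (hLD : dilation seq ≤ L) {j : J}
    (hj : pos j < (seq j).length) : ∃ (T : Fin (2 * L)) (m : M), j ∈ waitingJobs seq h pos T m := by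
  have hlen : (seq j).length ≤ L := (length_le_dilation seq j).trans hLD
  exact ⟨⟨h j + pos j, by omega⟩, (seq j)[pos j],
    mem_waitingJobs.mpr ⟨hj, List.getElem?_eq_getElem hj, rfl⟩⟩

variable [Fintype M]

theorem patternOccurs_waitingPattern : PatternOccurs (waitingPattern seq h pos) h := by
  intro T m p hp
  obtain ⟨hj, hi⟩ := mem_waitingPattern.mp hp
  rw [hi]
  exact (mem_waitingJobs.mp hj).2.2

theorem isBadPattern_waitingPattern {l : ℕ}
    (hsize : ∀ T : Fin (2 * L), ∀ m,
      waitingJobs seq h pos T m = ∅ ∨ l < #(waitingJobs seq h pos T m))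
    (hcard : Fintype.card J < 2 * ∑ T : Fin (2 * L), ∑ m, #(waitingJobs seq h pos T m)) :
    IsBadPattern seq L l (waitingPattern seq h pos) := by
  refine ⟨fun T m p hp => ?_, fun T m T' m' p hp p' hp' hjob => ?_, fun T m => ?_, ?_⟩
  · obtain ⟨hj, hi⟩ := mem_waitingPattern.mp hp
    rw [hi]
    exact (mem_waitingJobs.mp hj).2.1
  · obtain ⟨hj, hi⟩ := mem_waitingPattern.mp hp
    obtain ⟨hj', hi'⟩ := mem_waitingPattern.mp hp'
    obtain ⟨hT, hm⟩ := waitingJobs_unique hj (hjob ▸ hj')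
    exact ⟨Fin.ext hT, hm, Prod.ext hjob (by rw [hi, hi', hjob])⟩
  · rw [← card_eq_zero, card_waitingPattern, card_eq_zero]
    exact hsize T m
  · simpa only [card_waitingPattern] using hcard

theorem card_incomplete_le_sum_card_waitingJobs (hLD : dilation seq ≤ L) :
    #{j | pos j < (seq j).length} ≤ ∑ T : Fin (2 * L), ∑ m, #(waitingJobs seq h pos T m) := by
  classical
  calc #{j | pos j < (seq j).length}
      ≤ #(univ.biUnion fun T : Fin (2 * L) => univ.biUnion (waitingJobs seq h pos T)) := by
        refine card_le_card fun j hj => ?_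
        simpa only [mem_biUnion, mem_univ, true_and] using
          exists_mem_waitingJobs_of_lt_length hLD (mem_filter.mp hj).2
    _ ≤ ∑ T : Fin (2 * L), ∑ m, #(waitingJobs seq h pos T m) :=
        card_biUnion_le.trans (sum_le_sum fun _ _ => card_biUnion_le)

theorem IsGoodHash.two_mul_card_incomplete_le {l : ℕ} (hgood : IsGoodHash seq L l h)
    (hLD : dilation seq ≤ L)
    (hsize : ∀ T : Fin (2 * L), ∀ m,
      waitingJobs seq h pos T m = ∅ ∨ l < #(waitingJobs seq h pos T m)) :
    2 * #{j | pos j < (seq j).length} ≤ Fintype.card J := by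
  by_contra! hlt
  have hcover := card_incomplete_le_sum_card_waitingJobs (h := h) (pos := pos) hLD
  exact hgood _ (isBadPattern_waitingPattern hsize (by omega)) patternOccurs_waitingPattern

end Waiting

namespace IsStatelessExec

variable {M J : Type*} [Fintype M] [DecidableEq M] [Fintype J] {seq : J → List M} {L l : ℕ}
  {h : J → Fin L} {tmax : ℕ} {pos : ℕ → J → ℕ}

theorem pos_succ_eq_or_mem_waitingJobs (hexec : IsStatelessExec seq l h tmax pos) {t : ℕ}
    (ht : t < tmax) (j : J) :
    pos (t + 1) j = pos t j ∨
      pos (t + 1) j = pos t j + 1 ∧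
        ∃ m, j ∈ waitingJobs seq h (pos t) (t / l) m ∧
          #(waitingJobs seq h (pos t) (t / l) m) ≤ l := by
  obtain ⟨worksel, hmem, -, hadvance, hstay⟩ := hexec.2 t ht
  by_cases hsel : ∃ m, worksel m = some j
  · obtain ⟨m, hm⟩ := hsel
    exact .inr ⟨hadvance j ⟨m, hm⟩, m, hmem m j hm⟩
  · exact .inl (hstay j hsel)

theorem exists_mem_waitingJobs_pos_succ (hexec : IsStatelessExec seq l h tmax pos) {t : ℕ}
    (ht : t < tmax) {m : M} (hne : (waitingJobs seq h (pos t) (t / l) m).Nonempty)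
    (hle : #(waitingJobs seq h (pos t) (t / l) m) ≤ l) :
    ∃ j ∈ waitingJobs seq h (pos t) (t / l) m, pos (t + 1) j = pos t j + 1 := by
  obtain ⟨worksel, hmem, hworks, hadvance, -⟩ := hexec.2 t ht
  obtain ⟨j, hj⟩ := Option.isSome_iff_exists.mp (hworks m hne.card_pos hle)
  exact ⟨j, (hmem m j hj).1, hadvance j ⟨m, hj⟩⟩

theorem waitingJobs_succ_subset (hexec : IsStatelessExec seq l h tmax pos) {t T : ℕ}
    (ht : t < tmax) (hT : T ≤ t / l) (m : M) :
    waitingJobs seq h (pos (t + 1)) T m ⊆ waitingJobs seq h (pos t) T m := by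
  intro j hj
  rw [mem_waitingJobs] at hj ⊢
  obtain hstay | ⟨hadvance, m', hj', -⟩ := hexec.pos_succ_eq_or_mem_waitingJobs ht j
  · rwa [hstay] at hj
  · have hstep := (mem_waitingJobs.mp hj').2.2
    omega

theorem waitingJobs_subset_succ_of_lt_card (hexec : IsStatelessExec seq l h tmax pos) {t T : ℕ}
    (ht : t < tmax) {m : M} (hlt : l < #(waitingJobs seq h (pos t) T m)) :
    waitingJobs seq h (pos t) T m ⊆ waitingJobs seq h (pos (t + 1)) T m := by
  intro j hj
  obtain hstay | ⟨-, m', hj', hle⟩ := hexec.pos_succ_eq_or_mem_waitingJobs ht j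
  · rw [mem_waitingJobs] at hj ⊢
    rwa [hstay]
  · obtain ⟨rfl, rfl⟩ := waitingJobs_unique hj hj'
    exact absurd hle hlt.not_ge

theorem card_waitingJobs_succ_le_sub_one (hexec : IsStatelessExec seq l h tmax pos) {t T : ℕ}
    (ht : t < tmax) (hT : t / l = T) {m : M} (hle : #(waitingJobs seq h (pos t) T m) ≤ l) :
    #(waitingJobs seq h (pos (t + 1)) T m) ≤ #(waitingJobs seq h (pos t) T m) - 1 := by
  subst hT
  have hsub := hexec.waitingJobs_succ_subset ht le_rfl m
  obtain hempty | hne := (waitingJobs seq h (pos t) (t / l) m).eq_empty_or_nonempty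
  · rw [hempty] at hsub ⊢
    exact card_le_card hsub
  · obtain ⟨j, hj, hadvance⟩ := hexec.exists_mem_waitingJobs_pos_succ ht hne hle
    have hj' : j ∉ waitingJobs seq h (pos (t + 1)) (t / l) m := by
      rw [mem_waitingJobs] at hj ⊢
      omega
    exact Nat.le_sub_one_of_lt (card_lt_card ((ssubset_iff_of_subset hsub).mpr ⟨j, hj, hj'⟩))

theorem waitingJobs_subset_of_le (hexec : IsStatelessExec seq l h tmax pos) {t t' T : ℕ}
    (hT : T ≤ t / l) (htt' : t ≤ t') (ht' : t' ≤ tmax) (m : M) :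
    waitingJobs seq h (pos t') T m ⊆ waitingJobs seq h (pos t) T m := by
  induction t', htt' using Nat.le_induction with
  | base => exact Subset.rfl
  | succ t' htt' ih =>
    exact (hexec.waitingJobs_succ_subset ht' (hT.trans (Nat.div_le_div_right htt')) m).trans
      (ih (Nat.le_of_succ_le ht'))

theorem lt_card_waitingJobs_of_le (hexec : IsStatelessExec seq l h tmax pos) {t t' T : ℕ} {m : M}
    (hlt : l < #(waitingJobs seq h (pos t) T m)) (htt' : t ≤ t') (ht' : t' ≤ tmax) :
    l < #(waitingJobs seq h (pos t') T m) := by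
  induction t', htt' using Nat.le_induction with
  | base => exact hlt
  | succ t' _ ih =>
    have hlt' := ih (Nat.le_of_succ_le ht')
    exact hlt'.trans_le (card_le_card (hexec.waitingJobs_subset_succ_of_lt_card ht' hlt'))

theorem card_waitingJobs_mul_add_le_sub (hexec : IsStatelessExec seq l h tmax pos) {T s : ℕ} {m : M}
    (hle : #(waitingJobs seq h (pos (T * l)) T m) ≤ l) (hs : s ≤ l) (hmax : T * l + s ≤ tmax) :
    #(waitingJobs seq h (pos (T * l + s)) T m) ≤ l - s := by
  induction s with
  | zero => exact hle
  | succ s ih =>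
    have hcard : #(waitingJobs seq h (pos (T * l + s)) T m) ≤ l - s := ih (by omega) (by omega)
    have hstep : (T * l + s) / l = T := Nat.div_eq_of_lt_le (by omega) (by rw [Nat.succ_mul]; omega)
    calc #(waitingJobs seq h (pos (T * l + s + 1)) T m)
        ≤ #(waitingJobs seq h (pos (T * l + s)) T m) - 1 :=
          hexec.card_waitingJobs_succ_le_sub_one hmax hstep (hcard.trans (Nat.sub_le l s))
      _ ≤ l - s - 1 := Nat.sub_le_sub_right hcard 1

theorem waitingJobs_eq_empty_or_lt_card (hexec : IsStatelessExec seq l h tmax pos) (hl : 0 < l)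
    {T : ℕ} (hT : (T + 1) * l ≤ tmax) (m : M) :
    waitingJobs seq h (pos tmax) T m = ∅ ∨ l < #(waitingJobs seq h (pos tmax) T m) := by
  rw [Nat.succ_mul] at hT
  obtain hle | hlt := le_or_gt #(waitingJobs seq h (pos (T * l)) T m) l
  · left
    have hempty : waitingJobs seq h (pos (T * l + l)) T m = ∅ := by
      simpa using hexec.card_waitingJobs_mul_add_le_sub hle le_rfl hT
    have hstep : T ≤ (T * l + l) / l := (Nat.le_div_iff_mul_le hl).mpr (Nat.le_add_right _ _)
    exact subset_empty.mp (hempty ▸ hexec.waitingJobs_subset_of_le hstep hT le_rfl m)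
  · exact .inr (hexec.lt_card_waitingJobs_of_le hlt (by omega) le_rfl)

theorem card_complete_add_card_incomplete (hexec : IsStatelessExec seq l h tmax pos) :
    #{j | pos tmax j = (seq j).length} + #{j | pos tmax j < (seq j).length} = Fintype.card J := by
  have hiff (j : J) : pos tmax j < (seq j).length ↔ ¬ pos tmax j = (seq j).length :=
    (hexec.1 tmax le_rfl j).lt_iff_ne
  simp only [hiff]
  exact card_filter_add_card_filter_not _

end IsStatelessExec

/-- If `L ≥ D(J)` and `h` is `(L,l)`-good for `J`, then in any stateless weak-scheduler
execution up to time `2·L·l`, starting from arbitrary initial positions and with any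
choices of which eligible jobs the machines work on, at least half of the jobs are
complete at time `2·L·l`. -/
theorem good_hash_half_complete_stateless {M J : Type*} [Fintype M] [DecidableEq M]
    [Fintype J] (seq : J → List M) (L l : ℕ) (hL0 : 0 < L) (hl0 : 0 < l)
    (hLD : dilation seq ≤ L) (h : J → Fin L)
    (hgood : IsGoodHash seq L l h)
    (pos : ℕ → J → ℕ)
    (hexec : IsStatelessExec seq l h (2 * L * l) pos) :
    (Fintype.card J : ℝ) / 2 ≤
      ((Finset.univ.filter fun j : J =>
          pos (2 * L * l) j = (seq j).length).card : ℝ) := by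
  have hsize (T : Fin (2 * L)) (m : M) : waitingJobs seq h (pos (2 * L * l)) T m = ∅ ∨
      l < #(waitingJobs seq h (pos (2 * L * l)) T m) :=
    hexec.waitingJobs_eq_empty_or_lt_card hl0 (Nat.mul_le_mul_right l T.isLt) m
  have hincomplete : 2 * #{j | pos (2 * L * l) j < (seq j).length} ≤ Fintype.card J :=
    hgood.two_mul_card_incomplete_le hLD hsize
  have htotal := hexec.card_complete_add_card_incomplete
  have hcomplete : Fintype.card J ≤ 2 * #{j | pos (2 * L * l) j = (seq j).length} := by omega
  rw [div_le_iff₀' two_pos]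
  exact_mod_cast hcomplete
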